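/- Let n ≥ 1, let F : ℝⁿ → ℝⁿ be continuously differentiable, let A : ℝⁿ → ℝⁿ be a linear map, let ρ ∈ (0,1), x ∈ ℝⁿ and r > 0, and suppose the Krawczyk condition holds at x with radius r for A and ρ. If y₁, y₂ ∈ B(x,r) satisfy F(y₁) = 0 and F(y₂) = 0, then y₁ = y₂. -/

import Mathlib

/-!
The Krawczyk condition says that the affine map `u ↦ -A (F x) + r • (u - A (DF(z) u))` sends the
unit ball into the ball of radius `ρ * r` around `0`. Averaging over `u` and `-u` removes the
constant term, so that the linear part `id - A ∘ DF(z)` has norm at most `ρ < 1` at every point `z`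
of the box. By the mean value inequality, `y ↦ y - A (F y)` is therefore `ρ`-Lipschitz on the box;
as it translates all points of a fibre of `F` by the same vector, each fibre meets the box in at
most one point.
-/

open Metric Set

section RCLike

variable {𝕜 : Type*} [RCLike 𝕜]

theorem opNorm_le_of_norm_add_apply_le {E G : Type*}
    [SeminormedAddCommGroup E] [NormedSpace 𝕜 E] [SeminormedAddCommGroup G] [NormedSpace 𝕜 G]
    {T : E →L[𝕜] G} {c : G} {C : ℝ} (h : ∀ u, ‖u‖ ≤ 1 → ‖c + T u‖ ≤ C) : ‖T‖ ≤ C := by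
  have hC : 0 ≤ C := (norm_nonneg _).trans (h 0 (by simp))
  refine T.opNorm_le_of_unit_norm hC fun u hu ↦ ?_
  have two_mul_le : 2 * ‖T u‖ ≤ C + C := calc
    2 * ‖T u‖ = ‖(2 : 𝕜) • T u‖ := by rw [norm_smul, RCLike.norm_two]
    _ = ‖(c + T u) - (c + T (-u))‖ := by rw [map_neg, two_smul]; congr 1; abel
    _ ≤ ‖c + T u‖ + ‖c + T (-u)‖ := norm_sub_le _ _
    _ ≤ C + C := add_le_add (h u hu.le) (h (-u) (by rw [norm_neg, hu]))
  linarith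

theorem injOn_of_norm_id_sub_comp_hasFDerivWithinAt_le {E G : Type*}
    [NormedAddCommGroup E] [NormedSpace ℝ E] [NormedSpace 𝕜 E]
    [NormedAddCommGroup G] [NormedSpace 𝕜 G]
    {F : E → G} {F' : E → E →L[𝕜] G} {A : G →L[𝕜] E} {s : Set E} {ρ : ℝ}
    (hs : Convex ℝ s) (hF : ∀ z ∈ s, HasFDerivWithinAt F (F' z) s z)
    (hA : ∀ z ∈ s, ‖ContinuousLinearMap.id 𝕜 E - A ∘L F' z‖ ≤ ρ) (hρ : ρ < 1) :
    InjOn F s := by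
  intro y₁ hy₁ y₂ hy₂ hFy
  have hderiv (z : E) (hz : z ∈ s) :
      HasFDerivWithinAt (fun y ↦ y - A (F y)) (ContinuousLinearMap.id 𝕜 E - A ∘L F' z) s z :=
    (hasFDerivWithinAt_id z s).sub (A.hasFDerivAt.comp_hasFDerivWithinAt z (hF z hz))
  have contraction : ‖y₁ - y₂‖ ≤ ρ * ‖y₁ - y₂‖ := by
    simpa [hFy] using hs.norm_image_sub_le_of_norm_hasFDerivWithin_le hderiv hA hy₂ hy₁
  by_contra hne
  exact (mul_lt_of_lt_one_left (norm_sub_pos_iff.mpr hne) hρ).not_ge contraction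

end RCLike

section Krawczyk

variable {E G : Type*} [NormedAddCommGroup E] [NormedSpace ℝ E]
  [NormedAddCommGroup G] [NormedSpace ℝ G]
  {F : E → G} {F' : E → E →L[ℝ] G} {A : G →L[ℝ] E} {ρ r : ℝ} {x : E}

/-- The Krawczyk condition at `x` with radius `r`, for the preconditioner `A` and the contraction
constant `ρ`: the Krawczyk operator of the ball `B(x, r)`, translated by `-x`, has values of norm at
most `ρ * r`. As in interval arithmetic, the point `z` where the derivative is taken and the
direction `u` vary independently. The derivative of `F` is passed separately, as `F'`. -/
def KrawczykCondition (F : E → G) (F' : E → E →L[ℝ] G) (A : G →L[ℝ] E) (ρ : ℝ) (x : E) (r : ℝ) :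
    Prop :=
  ∀ z ∈ closedBall x r, ∀ u : E, ‖u‖ ≤ 1 → ‖-A (F x) + r • (u - A (F' z u))‖ ≤ ρ * r

theorem KrawczykCondition.norm_id_sub_comp_le (hK : KrawczykCondition F F' A ρ x r) (hr : 0 < r)
    {z : E} (hz : z ∈ closedBall x r) : ‖ContinuousLinearMap.id ℝ E - A ∘L F' z‖ ≤ ρ := by
  have scaled : ‖r • (ContinuousLinearMap.id ℝ E - A ∘L F' z)‖ ≤ ρ * r :=
    opNorm_le_of_norm_add_apply_le (hK z hz)
  rw [norm_smul, Real.norm_of_nonneg hr.le, mul_comm] at scaled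
  exact le_of_mul_le_mul_right scaled hr

theorem krawczyk_unique_zero_general (hr : 0 < r) (hρ : ρ < 1)
    (hF : ∀ z ∈ closedBall x r, HasFDerivWithinAt F (F' z) (closedBall x r) z)
    (hK : KrawczykCondition F F' A ρ x r) : InjOn F (closedBall x r) :=
  injOn_of_norm_id_sub_comp_hasFDerivWithinAt_le (convex_closedBall x r) hF
    (fun _ hz ↦ hK.norm_id_sub_comp_le hr hz) hρ

end Krawczyk

/-- Under the Krawczyk condition, `F` has at most one zero in the closed box `B(x,r)`. -/
theorem krawczyk_unique_zero
    (n : ℕ) (hn : 1 ≤ n)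
    (F : (Fin n → ℝ) → (Fin n → ℝ)) (hF : ContDiff ℝ 1 F)
    (A : (Fin n → ℝ) →L[ℝ] (Fin n → ℝ))
    (ρ : ℝ) (hρ : ρ ∈ Set.Ioo (0 : ℝ) 1)
    (x : Fin n → ℝ) (r : ℝ) (hr : 0 < r)
    (hK : ∀ z ∈ Metric.closedBall x r, ∀ u : Fin n → ℝ, ‖u‖ ≤ 1 →
      ‖-A (F x) + r • (u - A ((fderiv ℝ F z) u))‖ ≤ ρ * r)
    (y₁ y₂ : Fin n → ℝ)
    (hy₁ : y₁ ∈ Metric.closedBall x r) (hy₂ : y₂ ∈ Metric.closedBall x r)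
    (hFy₁ : F y₁ = 0) (hFy₂ : F y₂ = 0) :
    y₁ = y₂ :=
  krawczyk_unique_zero_general hr hρ.2
    (fun z _ ↦ (hF.differentiable one_ne_zero z).hasFDerivAt.hasFDerivWithinAt) hK hy₁ hy₂
    (hFy₁.trans hFy₂.symm)
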